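/- arXiv:2410.04180 — 2 statements merged into one kernel-verified Lean document; each statement's English description precedes it below -/
import Mathlib

section
/- Let V ⊆ ℂ be a Jordan domain, i.e., a bounded connected open set whose frontier ∂V is homeomorphic to the unit circle. Let f and g be holomorphic functions on an open neighborhood of the closure of V. Suppose that g(closure V) ⊆ f(V) and that g(∂V) ∩ f(∂V) = ∅. Then there exists λ ∈ V such that f(λ) = g(λ). -/
open Metric

/-- Continuous logarithms exist on simply connected, locally path connected spaces. -/
lemma exists_cont_log {A : Type*} [TopologicalSpace A] [SimplyConnectedSpace A]
    [LocallyPathConnectedSpace A] (u : A → ℂ) (hu : Continuous u) (h0 : ∀ a, u a ≠ 0) :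
    ∃ L : A → ℂ, Continuous L ∧ ∀ a, Complex.exp (L a) = u a := by
  obtain ⟨a₀⟩ : Nonempty A := inferInstance
  obtain ⟨F, ⟨-, hF⟩, -⟩ := Complex.isCoveringMap_exp.existsUnique_continuousMap_lifts
    (⟨fun a => ⟨u a, h0 a⟩, by fun_prop⟩ : C(A, {z : ℂ // z ≠ 0})) a₀ (Complex.log (u a₀))
    (Subtype.ext (Complex.exp_log (h0 a₀)))
  exact ⟨F, F.continuous, fun a => congrArg Subtype.val (congrFun hF a)⟩

lemma const_of_exp_eq {A : Type*} [TopologicalSpace A] [PreconnectedSpace A] (k : A → ℂ)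
    (hk : Continuous k) (h : ∀ a, Complex.exp (k a) = 1) (a b : A) : k a = k b :=
  Complex.isCoveringMap_exp.const_of_comp hk
    (fun x y => Subtype.ext ((h x).trans (h y).symm)) a b

/-- Degree additivity on the torus. -/
lemma torus_log (F : Circle × Circle → ℂ) (hF : Continuous F) (h0 : ∀ p, F p ≠ 0) :
    ∃ L : C(Circle, ℂ), ∀ z, Complex.exp (L z) * F (z, z) = F (z, 1) * F (1, z) := by
  obtain ⟨l, hl, hle⟩ := exists_cont_log (A := ℝ × ℝ)
    (fun p => F (Circle.exp p.1, Circle.exp p.2)) (by fun_prop) (fun p => h0 _)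
  have key1 : ∀ p q : ℝ × ℝ, l (p.1 + 2 * Real.pi, p.2) - l p
      = l (q.1 + 2 * Real.pi, q.2) - l q := by
    refine const_of_exp_eq (fun p : ℝ × ℝ => l (p.1 + 2 * Real.pi, p.2) - l p) (by fun_prop) ?_
    intro p
    rw [Complex.exp_sub, hle, hle, Circle.periodic_exp]
    exact div_self (h0 _)
  have key2 : ∀ p q : ℝ × ℝ, l (p.1, p.2 + 2 * Real.pi) - l p
      = l (q.1, q.2 + 2 * Real.pi) - l q := by
    refine const_of_exp_eq (fun p : ℝ × ℝ => l (p.1, p.2 + 2 * Real.pi) - l p) (by fun_prop) ?_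
    intro p
    rw [Complex.exp_sub, hle, hle, Circle.periodic_exp]
    exact div_self (h0 _)
  let K : C(ℝ, ℂ) := ⟨fun s => l (s, 0) + l (0, s) - l (s, s), by fun_prop⟩
  have hper : Function.Periodic K (2 * Real.pi) := by
    intro s
    have e1 := key1 (s, 0) (s, s)
    have e2 := key2 (0, s) (s + 2 * Real.pi, s)
    simp only [] at e1 e2
    change l (s + 2 * Real.pi, 0) + l (0, s + 2 * Real.pi)
      - l (s + 2 * Real.pi, s + 2 * Real.pi) = l (s, 0) + l (0, s) - l (s, s)
    linear_combination e1 + e2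
  have hq : Topology.IsQuotientMap (⟨Circle.exp, by fun_prop⟩ : C(ℝ, Circle)) :=
    Circle.isAddQuotientCoveringMap_exp.toIsQuotientMap
  have hfac : Function.FactorsThrough K (⟨Circle.exp, by fun_prop⟩ : C(ℝ, Circle)) := by
    intro s t hst
    obtain ⟨m, hm⟩ := Circle.exp_eq_exp.mp hst
    rw [hm]
    exact hper.int_mul m t
  refine ⟨hq.lift K hfac, fun z => ?_⟩
  obtain ⟨t, rfl⟩ := hq.surjective z
  have : hq.lift K hfac ((⟨Circle.exp, by fun_prop⟩ : C(ℝ, Circle)) t) = K t :=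
    DFunLike.congr_fun (hq.lift_comp K hfac) t
  rw [this]
  have h1 := hle (t, 0)
  have h2 := hle (0, t)
  have h3 := hle (t, t)
  simp only [Circle.exp_zero] at h1 h2 h3
  change Complex.exp (l (t, 0) + l (0, t) - l (t, t)) * F (Circle.exp t, Circle.exp t) =
    F (Circle.exp t, 1) * F (1, Circle.exp t)
  rw [← h1, ← h2, ← h3, Complex.exp_sub, Complex.exp_add]
  exact div_mul_cancel₀ _ (Complex.exp_ne_zero _)

lemma prod_log (s : Multiset ℂ) (R : ℝ) (hR : 0 < R) (hs : ∀ a ∈ s, ‖a‖ < R) :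
    ∃ Λ : ℂ → ℂ, ContinuousOn Λ (sphere 0 R) ∧
      ∀ z ∈ sphere (0 : ℂ) R, (s.map (fun a => z - a)).prod
        = z ^ s.card * Complex.exp (Λ z) := by
  induction s using Multiset.induction_on with
  | empty => exact ⟨fun _ => 0, continuousOn_const, by simp⟩
  | cons a s ih =>
    obtain ⟨Λ, hc, hΛ⟩ := ih fun b hb => hs b (Multiset.mem_cons_of_mem hb)
    have ha := hs a (Multiset.mem_cons_self a s)
    have hz0 : ∀ z ∈ sphere (0 : ℂ) R, z ≠ 0 := by
      rintro z hz rfl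
      simp at hz
      exact hR.ne hz
    have hsl : ∀ z ∈ sphere (0 : ℂ) R, 1 - a / z ∈ Complex.slitPlane := by
      intro z hz
      apply Complex.ball_one_subset_slitPlane
      rw [mem_sphere_zero_iff_norm] at hz
      rw [mem_ball, dist_eq_norm]
      simp only [sub_sub_cancel_left, norm_neg, norm_div, hz]
      rwa [div_lt_one hR]
    refine ⟨fun z => Λ z + Complex.log (1 - a / z), ?_, ?_⟩
    · refine hc.add (ContinuousOn.clog ?_ hsl)
      exact continuousOn_const.sub (continuousOn_const.div continuousOn_id hz0)
    · intro z hz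
      rw [Multiset.map_cons, Multiset.prod_cons, hΛ z hz, Multiset.card_cons, Complex.exp_add,
        Complex.exp_log (Complex.slitPlane_ne_zero (hsl z hz))]
      have := hz0 z hz
      field_simp
      ring

/-- A nowhere zero continuous function on the plane cannot agree with a nonconstant polynomial
on a large circle. -/
lemma no_ext (F : ℂ → ℂ) (hF : Continuous F) (h0 : ∀ z, F z ≠ 0) (s : Multiset ℂ) (R : ℝ)
    (hR : 0 < R) (hs : ∀ a ∈ s, ‖a‖ < R)
    (hP : ∀ z ∈ sphere (0 : ℂ) R, F z = (s.map (fun a => z - a)).prod) : s = 0 := by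
  obtain ⟨l, hl, hle⟩ := exists_cont_log F hF h0
  obtain ⟨Λ, hc, hΛ⟩ := prod_log s R hR hs
  let c : ℝ → ℂ := fun t => Complex.exp ((Real.log R : ℝ) + t * Complex.I)
  have hcc : Continuous c := by fun_prop
  have hcs : ∀ t, c t ∈ sphere (0 : ℂ) R := by
    intro t
    rw [mem_sphere_zero_iff_norm]
    simp [c, Complex.norm_exp, Real.exp_log hR]
  have hΛc : Continuous fun t => Λ (c t) := hc.comp_continuous hcc hcs
  have hk := const_of_exp_eq
    (fun t : ℝ => l (c t) - Λ (c t) - s.card * ((Real.log R : ℝ) + t * Complex.I))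
    (((hl.comp hcc).sub hΛc).sub (by fun_prop)) (by
      intro t
      rw [Complex.exp_sub, Complex.exp_sub, hle, hP _ (hcs t), hΛ _ (hcs t), Complex.exp_nat_mul]
      have h1 := Complex.exp_ne_zero (Λ (c t))
      have h2 : c t ≠ 0 := Complex.exp_ne_zero _
      change c t ^ s.card * Complex.exp (Λ (c t)) / Complex.exp (Λ (c t)) / c t ^ s.card = 1
      field_simp) 0 (2 * Real.pi)
  have hc0 : c (2 * Real.pi) = c 0 := by
    simp only [c]
    push_cast
    rw [Complex.exp_add, Complex.exp_two_pi_mul_I]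
    simp
  simp only [hc0] at hk
  have : (s.card : ℂ) * (2 * Real.pi * Complex.I) = 0 := by
    push_cast at hk
    linear_combination hk
  have h2 := Complex.two_pi_I_ne_zero
  rcases mul_eq_zero.mp this with h | h
  · exact Multiset.card_eq_zero.mp (by exact_mod_cast h)
  · exact absurd h h2

/-- Splitting off finitely many zeros of an analytic function. -/
lemma factor_zeros (K : Set ℂ) (Z : Finset ℂ) : ∀ (f : ℂ → ℂ), AnalyticOnNhd ℂ f K →
    (∀ z ∈ K, ¬ ∀ᶠ w in nhds z, f w = 0) → (∀ z ∈ K, f z = 0 → z ∈ Z) → (↑Z ⊆ K) →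
    ∃ (s : Multiset ℂ) (h : ℂ → ℂ), (∀ a ∈ s, a ∈ Z) ∧ AnalyticOnNhd ℂ h K ∧
      (∀ z ∈ K, h z ≠ 0) ∧ ∀ z ∈ K, f z = (s.map (fun a => z - a)).prod * h z := by
  classical
  induction Z using Finset.induction_on with
  | empty =>
    intro f hf _ hz _
    exact ⟨0, f, by simp, hf, fun z hzK h => by simpa using hz z hzK h, by simp⟩
  | insert a Z haZ ih =>
    intro f hf hne hz hK
    have haK : a ∈ K := hK (by simp)
    obtain ⟨n, q, hq, hqa, hev⟩ :=
      (hf a haK).exists_eventuallyEq_pow_smul_nonzero_iff.mpr (hne a haK)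
    let h : ℂ → ℂ := fun z => if z = a then q a else f z / (z - a) ^ n
    have hfh : ∀ z, z ∈ K → f z = (z - a) ^ n * h z := by
      intro z _
      by_cases hza : z = a
      · subst hza
        simp only [h, if_true]
        simpa using hev.self_of_nhds
      · have : z - a ≠ 0 := sub_ne_zero.mpr hza
        simp only [h, if_neg hza]
        field_simp
    have hhq : h =ᶠ[nhds a] q := by
      filter_upwards [hev] with z hzv
      by_cases hza : z = a
      · simp [h, hza]
      · have : z - a ≠ 0 := sub_ne_zero.mpr hza
        simp only [h, if_neg hza, hzv, smul_eq_mul]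
        field_simp
    have hoff : ∀ z, z ≠ a → h =ᶠ[nhds z] fun w => f w / (w - a) ^ n := by
      intro z hza
      filter_upwards [isOpen_ne.mem_nhds hza] with w hw
      simp only [h]
      rw [if_neg hw]
    have hh : AnalyticOnNhd ℂ h K := by
      intro z hzK
      by_cases hza : z = a
      · subst hza
        exact hq.congr hhq.symm
      · refine AnalyticAt.congr ?_ (hoff z hza).symm
        exact (hf z hzK).div (by fun_prop) (pow_ne_zero _ (sub_ne_zero.mpr hza))
    have hha : h a ≠ 0 := by simpa [h] using hqa
    obtain ⟨s, k, hs, hk, hk0, hsk⟩ := ih h hh (by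
      intro z hzK hev0
      by_cases hza : z = a
      · subst hza
        exact hha hev0.self_of_nhds
      · apply hne z hzK
        filter_upwards [hev0, hoff z hza, isOpen_ne.mem_nhds hza] with w h1 h2 h3
        rw [h1] at h2
        have : (w - a) ^ n ≠ 0 := pow_ne_zero _ (sub_ne_zero.mpr h3)
        exact (div_eq_zero_iff.mp h2.symm).resolve_right this) (by
      intro z hzK hz0
      have : f z = 0 := by rw [hfh z hzK, hz0, mul_zero]
      rcases Finset.mem_insert.mp (hz z hzK this) with rfl | h'
      · exact absurd hz0 hha
      · exact h') (fun z hz' => hK (by simp at hz' ⊢; exact Or.inr hz'))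
    refine ⟨Multiset.replicate n a + s, k, ?_, hk, hk0, ?_⟩
    · intro b hb
      rcases Multiset.mem_add.mp hb with hb | hb
      · simp [Multiset.eq_of_mem_replicate hb]
      · exact Finset.mem_insert_of_mem (hs b hb)
    · intro z hzK
      rw [hfh z hzK, hsk z hzK]
      simp [mul_assoc]

/-- Factorisation on the closure of a bounded domain. -/
lemma factor_domain (V : Set ℂ) (hVopen : IsOpen V) (hVconn : IsConnected V)
    (hVbdd : Bornology.IsBounded V) (hne : (frontier V).Nonempty) (f : ℂ → ℂ)
    (hf : AnalyticOnNhd ℂ f (closure V)) (h0 : ∀ z ∈ frontier V, f z ≠ 0) :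
    ∃ (s : Multiset ℂ) (h : ℂ → ℂ), (∀ a ∈ s, a ∈ V) ∧ ContinuousOn h (closure V) ∧
      (∀ z ∈ closure V, h z ≠ 0) ∧
      ∀ z ∈ closure V, f z = (s.map (fun a => z - a)).prod * h z := by
  have hcl : ∀ z ∈ closure V, f z = 0 → z ∈ V := by
    intro z hz hz0
    by_contra hzV
    exact h0 z ⟨hz, by rwa [hVopen.interior_eq]⟩ hz0
  have hnf : ∀ z ∈ closure V, ¬ ∃ᶠ w in nhdsWithin z {z}ᶜ, f w = 0 := by
    intro z hz hfr
    have hEq : Set.EqOn f 0 (closure V) :=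
      hf.eqOn_zero_of_preconnected_of_frequently_eq_zero
        hVconn.isPreconnected.closure hz hfr
    obtain ⟨x, hx⟩ := hne
    exact h0 x hx (hEq hx.1)
  have hcomp : IsCompact (closure V) := hVbdd.isCompact_closure
  have hfin : {z | z ∈ closure V ∧ f z = 0}.Finite := by
    by_contra hinf
    obtain ⟨z, hz, hacc⟩ := Set.Infinite.exists_accPt_of_subset_isCompact hinf hcomp
      (fun z hz => hz.1)
    apply hnf z hz
    rw [accPt_iff_frequently_nhdsNE] at hacc
    exact hacc.mono fun w hw => hw.2
  obtain ⟨s, h, hs, hh, hh0, hsh⟩ := factor_zeros (closure V) hfin.toFinset f hf (by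
    intro z hz hev
    apply hnf z hz
    exact (hev.filter_mono nhdsWithin_le_nhds).frequently) (by
    intro z hz hz0; simpa using ⟨hz, hz0⟩) (by intro z hz; simp at hz; exact hz.1)
  refine ⟨s, h, ?_, hh.continuousOn, hh0, hsh⟩
  intro a ha
  have := hs a ha
  simp at this
  exact hcl a this.1 this.2


/-- **A fixed-point/coincidence lemma on Jordan domains.**
Let `V ⊆ ℂ` be a Jordan domain (a bounded connected open set whose frontier is
homeomorphic to the unit circle). Let `f, g` be holomorphic on an open
neighborhood `O` of the closure of `V`. If `g(closure V) ⊆ f(V)` and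
`g(∂V) ∩ f(∂V) = ∅`, then there exists `λ ∈ V` with `f(λ) = g(λ)`. -/
theorem coincidence_on_jordan_domain
    (V : Set ℂ) (hVopen : IsOpen V) (hVconn : IsConnected V)
    (hVbdd : Bornology.IsBounded V)
    (hjordan : Nonempty (frontier V ≃ₜ (sphere (0 : ℂ) 1 : Set ℂ)))
    (f g : ℂ → ℂ) (O : Set ℂ) (hO : IsOpen O) (hclO : closure V ⊆ O)
    (hf : DifferentiableOn ℂ f O) (hg : DifferentiableOn ℂ g O)
    (hsub : g '' closure V ⊆ f '' V)
    (hdisj : (g '' frontier V) ∩ (f '' frontier V) = ∅) :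
    ∃ l ∈ V, f l = g l := by
  by_contra hcon
  push Not at hcon
  obtain ⟨φ⟩ := hjordan
  have hfa : AnalyticOnNhd ℂ f (closure V) := (hf.analyticOnNhd hO).mono hclO
  have hga : AnalyticOnNhd ℂ g (closure V) := (hg.analyticOnNhd hO).mono hclO
  have hfc := hfa.continuousOn
  have hgc := hga.continuousOn
  have hfront : frontier V ⊆ closure V := frontier_subset_closure
  have hd : ∀ z ∈ frontier V, ∀ w ∈ frontier V, f z - g w ≠ 0 := by
    intro z hz w hw h
    have : g w ∈ (g '' frontier V) ∩ (f '' frontier V) :=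
      ⟨⟨w, hw, rfl⟩, ⟨z, hz, sub_eq_zero.mp h⟩⟩
    rw [hdisj] at this
    exact this
  have hfg : ∀ z ∈ closure V, f z - g z ≠ 0 := by
    intro z hz
    by_cases hzV : z ∈ V
    · exact sub_ne_zero.mpr (hcon z hzV)
    · have hzf : z ∈ frontier V := ⟨hz, by rwa [hVopen.interior_eq]⟩
      exact hd z hzf z hzf
  -- the parametrisation of the frontier by the circle
  let γ : Circle → frontier V := fun z => φ.symm ⟨z, z.2⟩
  have hγ : Continuous γ := φ.symm.continuous.comp (by fun_prop)
  let ψ : frontier V → Circle := fun x =>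
    ⟨(φ x : ℂ), (φ x).2⟩
  have hψ : Continuous ψ := by
    apply Continuous.subtype_mk
    fun_prop
  have hγψ : ∀ x, γ (ψ x) = x := fun x => φ.symm_apply_apply x
  let p : ℂ := γ 1
  have hp : p ∈ frontier V := (γ 1).2
  have hfγ : Continuous fun z : Circle => f (γ z) :=
    (hfc.mono hfront).comp_continuous (continuous_subtype_val.comp hγ) fun z => (γ z).2
  have hgγ : Continuous fun z : Circle => g (γ z) :=
    (hgc.mono hfront).comp_continuous (continuous_subtype_val.comp hγ) fun z => (γ z).2
  obtain ⟨L, hL⟩ := torus_log (fun q => f (γ q.1) - g (γ q.2))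
    ((hfγ.comp continuous_fst).sub (hgγ.comp continuous_snd))
    (fun q => hd _ (γ q.1).2 _ (γ q.2).2)
  obtain ⟨M, hM⟩ := ContinuousMap.exists_restrict_eq (isClosed_frontier (s := V))
    (L.comp ⟨ψ, hψ⟩)
  have hMeq : ∀ z ∈ frontier V,
      Complex.exp (M z) * (f z - g z) = (f z - g p) * (f p - g z) := by
    intro z hz
    have h1 : M z = L (ψ ⟨z, hz⟩) := DFunLike.congr_fun hM ⟨z, hz⟩
    have h2 := hL (ψ ⟨z, hz⟩)
    simp only [hγψ] at h2
    rw [h1]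
    exact h2
  have hne : (frontier V).Nonempty := ⟨p, hp⟩
  obtain ⟨s, h, hs, hh, hh0, hsh⟩ := factor_domain V hVopen hVconn hVbdd hne
    (fun z => f z - g p) (fun z hz => (hfa z hz).sub analyticAt_const) (fun z hz => hd z hz p hp)
  obtain ⟨t, k, ht, hk, hk0, htk⟩ := factor_domain V hVopen hVconn hVbdd hne
    (fun z => f p - g z) (fun z hz => analyticAt_const.sub (hga z hz)) (fun z hz => hd p hp z hz)
  have hs0 : s ≠ 0 := by
    rintro rfl
    obtain ⟨z, hz, hzf⟩ := hsub ⟨p, hfront hp, rfl⟩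
    have h1 := hsh z (subset_closure hz)
    simp only [hzf, sub_self, Multiset.map_zero, Multiset.prod_zero, one_mul] at h1
    exact hh0 z (subset_closure hz) h1.symm
  have hst : ∀ a ∈ s + t, a ∈ V := by
    intro a ha
    rcases Multiset.mem_add.mp ha with h | h
    exacts [hs a h, ht a h]
  let P : ℂ → ℂ := fun z => ((s + t).map (fun a => z - a)).prod
  have hP : Continuous P := by
    simp only [P]
    exact continuous_multiset_prod _ fun a _ => by fun_prop
  have hP0 : ∀ z, z ∉ V → P z ≠ 0 := by
    intro z hz hzero
    rw [Multiset.prod_eq_zero_iff, Multiset.mem_map] at hzero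
    obtain ⟨a, ha, hza⟩ := hzero
    exact hz ((sub_eq_zero.mp hza) ▸ hst a ha)
  classical
  let Q : ℂ → ℂ := fun z => Complex.exp (M z) * (f z - g z) / (h z * k z)
  have hQ : ContinuousOn Q (closure V) := by
    refine ContinuousOn.div ?_ (hh.mul hk) fun z hz => mul_ne_zero (hh0 z hz) (hk0 z hz)
    exact (by fun_prop : Continuous fun z => Complex.exp (M z)).continuousOn.mul (hfc.sub hgc)
  have hcont : Continuous ((closure V).piecewise Q P) := by
    refine continuous_piecewise ?_ (by rwa [closure_closure]) hP.continuousOn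
    intro z hz
    have hzf : z ∈ frontier V := frontier_closure_subset hz
    have hzc := hfront hzf
    have h1 := hsh z hzc
    have h2 := htk z hzc
    have := hh0 z hzc
    have := hk0 z hzc
    simp only [Q, P, hMeq z hzf, h1, h2, Multiset.map_add, Multiset.prod_add]
    field_simp
  obtain ⟨R, hR0, hR⟩ := hVbdd.closure.subset_ball_lt 0 0
  have := no_ext _ hcont (by
    intro z
    by_cases hz : z ∈ closure V
    · rw [Set.piecewise_eq_of_mem _ _ _ hz]
      exact div_ne_zero (mul_ne_zero (Complex.exp_ne_zero _) (hfg z hz))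
        (mul_ne_zero (hh0 z hz) (hk0 z hz))
    · rw [Set.piecewise_eq_of_notMem _ _ _ hz]
      exact hP0 z fun h => hz (subset_closure h)) (s + t) R hR0 (by
    intro a ha
    simpa using hR (subset_closure (hst a ha))) (by
    intro z hz
    apply Set.piecewise_eq_of_notMem
    intro hzc
    have h1 := hR hzc
    rw [mem_ball] at h1
    rw [mem_sphere] at hz
    exact h1.ne hz)
  exact hs0 (by simp at this; exact this.1)
end

section
/- Let S ⊆ ℂ and U ⊆ ℂ be domains (open connected sets), and let F : S × U → ℂ be holomorphic jointly in (λ, z) such that for every λ ∈ S the map z ↦ F(λ, z) is nonconstant on U. Let γ : S → ℂ be holomorphic, let λ₀ ∈ S, let N ≥ 1, and let z₁, …, z_N be N distinct points of U with F(λ₀, z_i) = γ(λ₀) for all 1 ≤ i ≤ N. Then there exist: an open neighborhood V ⊆ S of λ₀; a holomorphic map π : 𝔻 → V with π(0) = λ₀ whose image is all of V and whose restriction π : 𝔻 ∖ {0} → V ∖ {λ₀} is a covering map; and holomorphic maps x_i : 𝔻 → U (1 ≤ i ≤ N) with x_i(0) = z_i, such that F(π(t), x_i(t)) = γ(π(t))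 for every t ∈ 𝔻 and every 1 ≤ i ≤ N. In other words, after pulling back by a finite branched cover of a neighborhood of λ₀ in parameter space, the N preimages z_i of the moving point γ(λ) under F(λ, ·) can be followed holomorphically. -/
open Metric

namespace Puiseux
open Filter Topology

/-- circle integral functional -/
theorem exists_circle_functional (r : ℝ) (hr : 0 < r) :
    ∃ I : C(sphere (0 : ℂ) r, ℂ) →L[ℂ] ℂ, ∀ (φ : C(sphere (0 : ℂ) r, ℂ)) (f : ℂ → ℂ),
      (∀ ζ : sphere (0 : ℂ) r, φ ζ = f ζ) →
      I φ = (2 * Real.pi * Complex.I : ℂ)⁻¹ * ∮ ζ in C(0, r), f ζ := by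
  let c : ℝ → sphere (0 : ℂ) r := fun θ => ⟨circleMap 0 r θ, circleMap_mem_sphere 0 hr.le θ⟩
  have hc : Continuous c := (continuous_circleMap 0 r).subtype_mk _
  let J : C(sphere (0 : ℂ) r, ℂ) →ₗ[ℂ] ℂ :=
    { toFun := fun φ => ∫ θ in (0:ℝ)..(2 * Real.pi), deriv (circleMap 0 r) θ * φ (c θ)
      map_add' := by
        intro φ ψ
        simp only [ContinuousMap.add_apply, mul_add]
        apply intervalIntegral.integral_add <;>
        · apply Continuous.intervalIntegrable
          simp only [deriv_circleMap]
          fun_prop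
      map_smul' := by
        intro a φ
        simp only [ContinuousMap.smul_apply, smul_eq_mul, RingHom.id_apply]
        rw [← intervalIntegral.integral_const_mul]
        congr 1; ext θ; ring }
  have hJ : ∀ φ, ‖J φ‖ ≤ (r * |2 * Real.pi - 0|) * ‖φ‖ := by
    intro φ
    have := intervalIntegral.norm_integral_le_of_norm_le_const (a := 0) (b := 2 * Real.pi)
      (f := fun θ => deriv (circleMap 0 r) θ * φ (c θ)) (C := r * ‖φ‖) (by
        intro θ _
        rw [norm_mul]
        gcongr
        · simp [deriv_circleMap, abs_of_pos hr]
        · exact φ.norm_coe_le_norm _)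
    calc _ ≤ _ := this
      _ = _ := by ring
  refine ⟨(2 * Real.pi * Complex.I : ℂ)⁻¹ • J.mkContinuous _ hJ, ?_⟩
  intro φ f h
  simp only [smul_apply, smul_eq_mul, LinearMap.mkContinuous_apply]
  congr 1
  simp only [circleIntegral, J, LinearMap.coe_mk, AddHom.coe_mk, smul_eq_mul]
  congr 1; ext θ; rw [h]

/-- Cauchy kernel -/
theorem exists_kernel (r : ℝ) (hr : 0 < r) :
    ∃ K : ℂ → C(sphere (0 : ℂ) r, ℂ), AnalyticAt ℂ K 0 ∧
      ∀ w ∈ ball (0 : ℂ) r, ∀ ζ : sphere (0 : ℂ) r, K w ζ = ((ζ : ℂ) - w)⁻¹ := by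
  let ι : C(sphere (0 : ℂ) r, ℂ) := ⟨fun ζ => ζ, continuous_subtype_val⟩
  have hu : ∀ w ∈ ball (0 : ℂ) r, IsUnit (ι - w • (1 : C(sphere (0 : ℂ) r, ℂ))) := by
    intro w hw
    rw [ContinuousMap.isUnit_iff_forall_ne_zero]
    intro ζ h
    simp [ι] at h
    have h1 : ‖(ζ : ℂ)‖ = r := by simpa using ζ.2
    have : (ζ : ℂ) = w := by linear_combination h
    rw [this] at h1
    simp at hw
    linarith
  refine ⟨fun w => Ring.inverse (ι - w • (1 : C(sphere (0 : ℂ) r, ℂ))), ?_, ?_⟩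
  · have h0 := hu 0 (by simpa using hr)
    have h1 := analyticAt_inverse (𝕜 := ℂ) h0.unit
    rw [h0.unit_spec] at h1
    refine AnalyticAt.fun_comp (g := Ring.inverse) (f := fun w : ℂ => ι - w • (1 : C(sphere (0 : ℂ) r, ℂ))) h1 ?_
    fun_prop
  · intro w hw ζ
    have := Ring.mul_inverse_cancel _ (hu w hw)
    have h2 := congrArg (fun φ : C(sphere (0 : ℂ) r, ℂ) => φ ζ) this
    simp [ι] at h2
    exact eq_inv_of_mul_eq_one_right h2

theorem exists_slice (r : ℝ) (hr : 0 < r) (f : ℂ × ℂ → ℂ)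
    (hf : DifferentiableOn ℂ f (closedBall 0 r ×ˢ closedBall 0 r)) :
    ∃ Φ : ℂ → C(sphere (0 : ℂ) r, ℂ), AnalyticAt ℂ Φ 0 ∧
      ∀ w ∈ ball (0 : ℂ) r, ∀ ζ : sphere (0 : ℂ) r, Φ w ζ = f (w, ζ) := by
  classical
  let Ψ₀ : C(closedBall (0 : ℂ) r × sphere (0 : ℂ) r, ℂ) :=
    ⟨fun p => f (p.1, p.2), by
      refine hf.continuousOn.comp_continuous (by fun_prop) ?_
      intro p
      exact ⟨p.1.2, sphere_subset_closedBall p.2.2⟩⟩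
  let Ψ := Ψ₀.curry
  let g : ℂ → C(sphere (0 : ℂ) r, ℂ) := fun w => if h : w ∈ closedBall (0 : ℂ) r then Ψ ⟨w, h⟩ else 0
  have hg : ∀ w ∈ closedBall (0 : ℂ) r, ∀ ζ, g w ζ = f (w, ζ) := by
    intro w hw ζ
    simp only [g, dif_pos hw]
    rfl
  have hgc : ContinuousOn g (closedBall 0 r) := by
    rw [continuousOn_iff_continuous_domRestrict]
    convert Ψ.continuous using 1
    ext1 w
    simp only [Set.domRestrict_apply, g, dif_pos w.2]
  lift r to NNReal using hr.le
  have hci : CircleIntegrable g 0 r :=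
    ContinuousOn.circleIntegrable (by positivity) (hgc.mono sphere_subset_closedBall)
  have key := hasFPowerSeriesOn_cauchy_integral hci (by exact_mod_cast hr)
  refine ⟨_, key.analyticAt, ?_⟩
  intro w hw ζ
  have hci2 : CircleIntegrable (fun z => (z - w)⁻¹ • g z) 0 r := by
    apply ContinuousOn.circleIntegrable (by positivity)
    refine ContinuousOn.smul (ContinuousOn.inv₀ (f := fun z : ℂ => z - w) (by fun_prop) ?_) (hgc.mono sphere_subset_closedBall)
    intro z hz h
    simp at hz hw
    rw [sub_eq_zero.1 h] at hz
    linarith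
  let ev : C(sphere (0 : ℂ) r, ℂ) →L[ℂ] ℂ := ContinuousMap.evalCLM ℂ ζ
  have e1 : (∮ z in C(0, r), (z - w)⁻¹ • g z) ζ = ∮ z in C(0, r), (z - w)⁻¹ • f (z, ζ) := by
    have := ev.intervalIntegral_comp_comm hci2.out
    change ev (∮ z in C(0, r), (z - w)⁻¹ • g z) = _
    simp only [circleIntegral]
    rw [← this]
    congr 1
    ext θ
    simp only [map_smul]
    congr 2
    exact hg _ (sphere_subset_closedBall (circleMap_mem_sphere 0 hr.le θ)) ζ
  rw [ContinuousMap.smul_apply, e1]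
  have hd : DifferentiableOn ℂ (fun z => f (z, ζ)) (closedBall 0 r) := by
    refine hf.comp (t := closedBall 0 (r:ℝ) ×ˢ closedBall 0 (r:ℝ)) (f := fun z : ℂ => (z, (ζ : ℂ))) (by fun_prop) ?_
    intro z hz
    exact ⟨hz, sphere_subset_closedBall ζ.2⟩
  exact (hd.mono closure_ball_subset_closedBall).diffContOnCl.two_pi_i_inv_smul_circleIntegral_sub_inv_smul hw

theorem decomp {f : ℂ × ℂ → ℂ} (hf : ∀ᶠ p in 𝓝 (0 : ℂ × ℂ), DifferentiableAt ℂ f p) :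
    ∃ (g : ℕ → ℂ → ℂ) (R : ℕ → ℂ × ℂ → ℂ), (∀ n, AnalyticAt ℂ (g n) 0) ∧
      (∀ n, AnalyticAt ℂ (R n) 0) ∧
      ∀ n, ∀ᶠ p in 𝓝 (0 : ℂ × ℂ),
        f p = ∑ j ∈ Finset.range n, p.2 ^ j * g j p.1 + p.2 ^ n * R n p := by
  obtain ⟨r, hr, hfr⟩ : ∃ r > 0, DifferentiableOn ℂ f (closedBall 0 r ×ˢ closedBall 0 r) := by
    obtain ⟨r, hr, h⟩ := Metric.nhds_basis_closedBall.eventually_iff.1 hf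
    refine ⟨r, hr, fun p hp => (h ?_).differentiableWithinAt⟩
    rw [closedBall_prod_same] at hp
    exact hp
  obtain ⟨I, hI⟩ := exists_circle_functional r hr
  obtain ⟨K, hKa, hK⟩ := exists_kernel r hr
  obtain ⟨Φ, hΦa, hΦ⟩ := exists_slice r hr f hfr
  refine ⟨fun n w => I (Φ w * K 0 ^ (n + 1)), fun n p => I (Φ p.1 * (K 0 ^ n * K p.2)), ?_, ?_, ?_⟩
  · intro n
    exact (I.analyticAt _).fun_comp (hΦa.mul analyticAt_const)
  · intro n
    refine (I.analyticAt _).fun_comp (AnalyticAt.mul ?_ (analyticAt_const.mul ?_))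
    · exact AnalyticAt.fun_comp (f := fun p : ℂ × ℂ => p.1) hΦa analyticAt_fst
    · exact AnalyticAt.fun_comp (f := fun p : ℂ × ℂ => p.2) hKa analyticAt_snd
  intro n
  have hb : ball (0 : ℂ) r ×ˢ ball (0 : ℂ) r ∈ 𝓝 (0 : ℂ × ℂ) :=
    prod_mem_nhds (ball_mem_nhds _ hr) (ball_mem_nhds _ hr)
  filter_upwards [hb] with p hp
  obtain ⟨h1, h2⟩ := hp
  have hne : ∀ ζ : sphere (0 : ℂ) r, (ζ : ℂ) ≠ 0 ∧ (ζ : ℂ) - p.2 ≠ 0 := by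
    intro ζ
    have h3 : ‖(ζ : ℂ)‖ = r := by simpa using ζ.2
    simp at h2
    constructor
    · intro h; rw [h] at h3; simp at h3; linarith
    · intro h; rw [sub_eq_zero.1 h] at h3; linarith
  have hK' : K p.2 = K 0 + p.2 • (K 0 * K p.2) := by
    ext ζ
    obtain ⟨h3, h4⟩ := hne ζ
    simp [hK _ h2, hK 0 (by simpa using hr)]
    field_simp
    ring
  have hsum : ∀ n, K p.2 = ∑ j ∈ Finset.range n, p.2 ^ j • K 0 ^ (j + 1) + p.2 ^ n • (K 0 ^ n * K p.2) := by
    intro n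
    induction n with
    | zero => simp
    | succ n ih =>
      rw [Finset.sum_range_succ, add_assoc]
      nth_rewrite 1 [ih]
      congr 1
      nth_rewrite 1 [hK']
      rw [mul_add, smul_add, ← pow_succ, mul_smul_comm, smul_smul, ← pow_succ, ← mul_assoc, ← pow_succ]
  have hfI : f p = I (Φ p.1 * K p.2) := by
    rw [hI (Φ p.1 * K p.2) (fun ζ => (ζ - p.2)⁻¹ • f (p.1, ζ))]
    · have hd : DifferentiableOn ℂ (fun z => f (p.1, z)) (closedBall 0 r) := by
        refine hfr.comp (t := closedBall 0 r ×ˢ closedBall 0 r) (f := fun z : ℂ => (p.1, z)) (by fun_prop) ?_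
        intro z hz
        exact ⟨ball_subset_closedBall h1, hz⟩
      have := (hd.mono closure_ball_subset_closedBall).diffContOnCl.two_pi_i_inv_smul_circleIntegral_sub_inv_smul h2
      rw [smul_eq_mul] at this
      rw [this]
    · intro ζ
      simp [hK _ h2, hΦ _ h1, mul_comm]
  rw [hfI]
  conv_lhs => rw [hsum n]
  simp only [mul_add, map_add, Finset.mul_sum, map_sum, mul_smul_comm, map_smul, smul_eq_mul]

theorem analyticAt_of_differentiable {f : ℂ × ℂ → ℂ} {q : ℂ × ℂ}
    (hf : ∀ᶠ p in 𝓝 q, DifferentiableAt ℂ f p) : AnalyticAt ℂ f q := by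
  have h1 : ∀ᶠ p in 𝓝 (0 : ℂ × ℂ), DifferentiableAt ℂ (fun p => f (q + p)) p := by
    have : Tendsto (fun p => q + p) (𝓝 0) (𝓝 q) := by
      have : Continuous (fun p => q + p) := by fun_prop
      simpa using this.tendsto 0
    filter_upwards [this.eventually hf] with p hp
    exact hp.comp p (by fun_prop)
  obtain ⟨g, R, -, hR, h⟩ := decomp h1
  have h2 : AnalyticAt ℂ (fun p => f (q + p)) 0 := by
    refine (hR 0).congr ?_
    filter_upwards [h 0] with p hp
    simpa using hp.symm
  have h3 : AnalyticAt ℂ (fun p => (fun p => f (q + p)) (p - q)) q :=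
    AnalyticAt.fun_comp (g := (fun p => f (q + p))) (f := fun p => p - q) (by simpa using h2) (by fun_prop)
  simpa using h3

end Puiseux

namespace Puiseux
open Filter Topology

theorem iteratedDeriv_of_taylor {f r : ℂ → ℂ} {a : ℕ → ℂ} {n : ℕ} (hr : AnalyticAt ℂ r 0)
    (h : ∀ᶠ z in 𝓝 0, f z = ∑ j ∈ Finset.range n, z ^ j * a j + z ^ n * r z) :
    ∀ j < n, iteratedDeriv j f 0 = (j.factorial : ℂ) * a j := by
  have hS : AnalyticAt ℂ (fun z : ℂ => ∑ j ∈ Finset.range n, z ^ j * a j) 0 := by fun_prop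
  have hT : AnalyticAt ℂ (fun z : ℂ => z ^ n * r z) 0 := by fun_prop
  have hT0 : ∀ i < n, iteratedDeriv i (fun z : ℂ => z ^ n * r z) 0 = 0 := by
    rw [← natCast_le_analyticOrderAt_iff_iteratedDeriv_eq_zero hT, natCast_le_analyticOrderAt hT]
    exact ⟨r, hr, by simp⟩
  intro j hj
  have h' : f =ᶠ[𝓝 0] fun z => (∑ j ∈ Finset.range n, z ^ j * a j) + z ^ n * r z := h
  rw [h'.iteratedDeriv_eq, iteratedDeriv_fun_add hS.contDiffAt hT.contDiffAt, hT0 j hj, add_zero]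
  simp (disch := fun_prop) only [iteratedDeriv_fun_sum, iteratedDeriv_mul_const_field,
      iteratedDeriv_fun_pow_zero]
  simp [Finset.sum_ite_eq_of_mem _ _ _ (Finset.mem_range.mpr hj)]

theorem analyticAt_partial_deriv {D : ℂ × ℂ → ℂ} (hD : AnalyticAt ℂ D 0) :
    AnalyticAt ℂ (fun p : ℂ × ℂ => deriv (fun z => D (p.1, z)) p.2) 0 := by
  have h1 : AnalyticAt ℂ (fun p : ℂ × ℂ => fderiv ℂ D p (0, 1)) 0 :=
    ((ContinuousLinearMap.apply ℂ ℂ ((0, 1) : ℂ × ℂ)).analyticAt _).fun_comp hD.fderiv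
  refine h1.congr ?_
  filter_upwards [hD.eventually_analyticAt] with p hp
  have h2 : HasDerivAt (fun z : ℂ => (p.1, z)) ((0, 1) : ℂ × ℂ) p.2 :=
    (hasDerivAt_const p.2 p.1).prodMk (hasDerivAt_id p.2)
  have h3 := HasFDerivAt.comp_hasDerivAt (f := fun z : ℂ => (p.1, z)) (l := D) p.2
    (hp.differentiableAt.hasFDerivAt) h2
  exact h3.deriv.symm

theorem analyticAt_iteratedDeriv {G : ℂ × ℂ → ℂ} (hG : AnalyticAt ℂ G 0) (n : ℕ) :
    AnalyticAt ℂ (fun p : ℂ × ℂ => iteratedDeriv n (fun z => G (p.1, z)) p.2) 0 := by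
  induction n with
  | zero => simpa using hG
  | succ n ih => simpa [iteratedDeriv_succ] using analyticAt_partial_deriv ih

theorem implicit {D : ℂ × ℂ → ℂ} (hD : AnalyticAt ℂ D 0) (h0 : D 0 = 0)
    (h1 : deriv (fun z => D (0, z)) 0 ≠ 0) :
    ∃ a : ℂ → ℂ, AnalyticAt ℂ a 0 ∧ a 0 = 0 ∧ ∀ᶠ w in 𝓝 0, D (w, a w) = 0 := by
  have h2 : HasDerivAt (fun z : ℂ => ((0 : ℂ), z)) ((0, 1) : ℂ × ℂ) 0 :=
    (hasDerivAt_const (0 : ℂ) (0 : ℂ)).prodMk (hasDerivAt_id (0 : ℂ))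
  have h3 := HasFDerivAt.comp_hasDerivAt (f := fun z : ℂ => ((0 : ℂ), z)) (l := D) 0
    (hD.differentiableAt.hasFDerivAt) h2
  have h4 : fderiv ℂ D 0 (0, 1) ≠ 0 := by
    have := h3.deriv
    rw [← this]; exact h1
  have inv : (fderiv ℂ D 0 ∘L .inr ℂ ℂ ℂ).IsInvertible := by
    refine ⟨ContinuousLinearEquiv.unitsEquivAut ℂ (Units.mk0 _ h4), ?_⟩
    ext
    simp
  have cd : ContDiffAt ℂ ⊤ D 0 := hD.contDiffAt
  refine ⟨cd.implicitFunction (by simp) inv, ?_, cd.implicitFunction_apply_self (by simp) inv, ?_⟩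
  · exact (cd.contDiffAt_implicitFunction (by simp) inv).analyticAt
  · simpa [h0] using cd.eventually_apply_implicitFunction (by simp) inv

open Polynomial in
theorem poly_root (m : ℕ) (P : ℂ[X]) (hd : P.natDegree = m) (hm : 1 ≤ m)
    (h1 : P.coeff (m - 1) = 0) (h2 : ∃ j < m, P.coeff j ≠ 0) :
    ∃ w k, 1 ≤ k ∧ k < m ∧ ∃ Q : ℂ[X], Q.eval w ≠ 0 ∧ P = (X - C w) ^ k * Q := by
  have hP0 : P ≠ 0 := by rintro rfl; simp at hd; omega
  obtain ⟨w, hw⟩ := IsAlgClosed.exists_root P (by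
    rw [Polynomial.degree_eq_natDegree hP0, hd]; norm_cast; omega)
  obtain ⟨Q, hQ, hQ2⟩ := Polynomial.exists_eq_pow_rootMultiplicity_mul_and_not_dvd P hP0 w
  have hk : 1 ≤ P.rootMultiplicity w := (Polynomial.rootMultiplicity_pos hP0).2 hw
  refine ⟨w, _, hk, ?_, Q, ?_, hQ⟩
  · by_contra hlt
    push Not at hlt
    set k := P.rootMultiplicity w
    have hQ0 : Q ≠ 0 := by rintro rfl; simp at hQ2
    have hdeg := congrArg natDegree hQ
    rw [natDegree_mul (pow_ne_zero _ (X_sub_C_ne_zero w)) hQ0, natDegree_pow, natDegree_X_sub_C, hd] at hdeg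
    have hkm : k = m := by omega
    have hQd : Q.natDegree = 0 := by omega
    obtain ⟨c, rfl⟩ := natDegree_eq_zero.1 hQd
    have hc : c ≠ 0 := by simpa using hQ0
    rw [hkm] at hQ
    obtain ⟨n, rfl⟩ : ∃ n, m = n + 1 := ⟨m - 1, by omega⟩
    have hw0 : w = 0 := by
      rw [hQ, sub_eq_add_neg, ← C_neg] at h1
      simp only [add_tsub_cancel_right, coeff_mul_C, coeff_X_add_C_pow] at h1
      simpa [hc, Nat.choose_succ_self_right, Nat.cast_add_one_ne_zero] using h1
    obtain ⟨j, hj, hj2⟩ := h2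
    apply hj2
    rw [hQ, hw0]
    simp [coeff_X_pow]
    intro h; omega
  · intro h
    exact hQ2 (dvd_iff_isRoot.2 h)

theorem newton_exponents (m : ℕ) (g : ℕ → ℂ → ℂ)
    (hg : ∀ j < m, AnalyticAt ℂ (g j) 0) (hg0 : ∀ j < m, g j 0 = 0)
    (hne : ∃ j < m, ¬ ∀ᶠ w in 𝓝 0, g j w = 0) :
    ∃ (p q : ℕ) (h : ℕ → ℂ → ℂ), 1 ≤ p ∧ 1 ≤ q ∧
      (∀ j < m, AnalyticAt ℂ (h j) 0) ∧
      (∀ j < m, ∀ᶠ s in 𝓝 0, g j (s ^ q) = s ^ (p * (m - j)) * h j s) ∧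
      (∃ j < m, h j 0 ≠ 0) ∧
      (∀ j < m, (∀ᶠ w in 𝓝 0, g j w = 0) → h j 0 = 0) := by
  classical
  let T := (Finset.range m).filter (fun j => ¬ ∀ᶠ w in 𝓝 0, g j w = 0)
  have hT : T.Nonempty := by
    obtain ⟨j, hj, hj2⟩ := hne
    exact ⟨j, by simp only [T, Finset.mem_filter, Finset.mem_range]; exact ⟨hj, hj2⟩⟩
  have hu : ∀ j, ∃ (n : ℕ) (u : ℂ → ℂ), j ∈ T → (1 ≤ n ∧ AnalyticAt ℂ u 0 ∧ u 0 ≠ 0 ∧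
      ∀ᶠ w in 𝓝 0, g j w = w ^ n * u w) := by
    intro j
    by_cases hj : j ∈ T
    · have hj' := hj
      simp only [T, Finset.mem_filter, Finset.mem_range] at hj'
      obtain ⟨hjm, hj2⟩ := hj'
      have h3 : analyticOrderAt (g j) 0 ≠ ⊤ := by rwa [Ne, analyticOrderAt_eq_top]
      obtain ⟨u, hua, hu0, hu⟩ := (hg j hjm).analyticOrderAt_ne_top.1 h3
      refine ⟨_, u, fun _ => ⟨?_, hua, hu0, by simpa [EventuallyEq] using hu⟩⟩
      by_contra hlt
      have h4 : analyticOrderNatAt (g j) 0 = 0 := by omega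
      rw [h4] at hu
      have := hu.self_of_nhds
      simp [hg0 j hjm] at this
      exact hu0 this.symm
    · exact ⟨0, 0, fun h => absurd h hj⟩
  choose o u hou using hu
  obtain ⟨i, hiT, hi⟩ := T.exists_min_image (fun j => (o j : ℚ) / ((m - j : ℕ) : ℚ)) hT
  have hlt : ∀ j ∈ T, j < m := by
    intro j hj
    simp only [T, Finset.mem_filter, Finset.mem_range] at hj
    exact hj.1
  have him := hlt i hiT
  have hle : ∀ j ∈ T, o i * (m - j) ≤ (m - i) * o j := by
    intro j hj
    have := hi j hj
    have hjm := hlt j hj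
    have a1 : (0 : ℚ) < ((m - i : ℕ) : ℚ) := by norm_cast; omega
    have a2 : (0 : ℚ) < ((m - j : ℕ) : ℚ) := by norm_cast; omega
    rw [div_le_div_iff₀ a1 a2] at this
    rw [mul_comm (m - i)]
    exact_mod_cast this
  have hq : m - i ≠ 0 := by omega
  have hpow : Tendsto (fun s : ℂ => s ^ (m - i)) (𝓝 0) (𝓝 0) := by
    have : Continuous (fun s : ℂ => s ^ (m - i)) := by fun_prop
    simpa [hq] using this.tendsto 0
  refine ⟨o i, m - i, fun j s => if j ∈ T then s ^ ((m - i) * o j - o i * (m - j)) * u j (s ^ (m - i)) else 0,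
    (hou i hiT).1, by omega, ?_, ?_, ⟨i, him, ?_⟩, ?_⟩
  · intro j hj
    by_cases hjT : j ∈ T
    · simp only [hjT, if_true]
      refine AnalyticAt.mul (by fun_prop) (AnalyticAt.fun_comp (g := u j) (f := fun s : ℂ => s ^ (m - i)) ?_ (by fun_prop))
      simpa [hq] using (hou j hjT).2.1
    · simp only [hjT, if_false]
      exact analyticAt_const
  · intro j hj
    by_cases hjT : j ∈ T
    · simp only [hjT, if_true]
      filter_upwards [hpow.eventually (hou j hjT).2.2.2] with s hs
      rw [hs, ← mul_assoc, ← pow_add, ← pow_mul]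
      congr 2
      have := hle j hjT
      omega
    · simp only [hjT, if_false, mul_zero]
      have : ∀ᶠ w in 𝓝 0, g j w = 0 := by
        by_contra hh
        exact hjT (by simp only [T, Finset.mem_filter, Finset.mem_range]; exact ⟨hj, hh⟩)
      exact hpow.eventually this
  · simp only [hiT, if_true, mul_comm (m - i), Nat.sub_self, pow_zero, one_mul, zero_pow hq]
    exact (hou i hiT).2.2.1
  · intro j hj hz
    have : j ∉ T := by
      simp only [T, Finset.mem_filter, Finset.mem_range]
      exact fun h => h.2 hz
    simp [this]

end Puiseux
namespace Puiseux
open Filter Topology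

theorem puiseux (m : ℕ) : ∀ G : ℂ × ℂ → ℂ, 1 ≤ m → AnalyticAt ℂ G 0 →
    analyticOrderAt (fun z => G (0, z)) 0 = m →
    ∃ k, 1 ≤ k ∧ ∃ y : ℂ → ℂ, AnalyticAt ℂ y 0 ∧ y 0 = 0 ∧ ∀ᶠ t in 𝓝 0, G (t ^ k, y t) = 0 := by
  induction m using Nat.strong_induction_on with
  | _ m IH =>
  intro G hm hG hord
  have hG0 : AnalyticAt ℂ (fun z : ℂ => G (0, z)) 0 :=
    AnalyticAt.fun_comp (g := G) (f := fun z : ℂ => ((0 : ℂ), z)) hG (by fun_prop)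
  obtain ⟨it0, it1⟩ := (analyticOrderAt_eq_nat_iff_iteratedDeriv_eq_zero hG0).1 hord
  -- the shift
  obtain ⟨a, haa, ha0, ha⟩ := implicit (analyticAt_iteratedDeriv hG (m - 1))
    (by simpa using it0 (m - 1) (by omega))
    (by
      have : m = m - 1 + 1 := by omega
      rw [this, iteratedDeriv_succ] at it1
      exact it1)
  simp only at ha
  let G' : ℂ × ℂ → ℂ := fun p => G (p.1, p.2 + a p.1)
  have hG' : AnalyticAt ℂ G' 0 := by
    refine AnalyticAt.fun_comp (g := G) (f := fun p : ℂ × ℂ => (p.1, p.2 + a p.1)) (by simpa [ha0, Prod.mk_zero_zero] using hG) ?_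
    refine analyticAt_fst.prod (analyticAt_snd.add ?_)
    exact AnalyticAt.fun_comp (g := a) (f := fun p : ℂ × ℂ => p.1) haa analyticAt_fst
  obtain ⟨g, R, hga, hRa, hdec⟩ := decomp
    (hG'.eventually_analyticAt.mono fun p hp => hp.differentiableAt)
  have hcoef : ∀ᶠ w in 𝓝 (0 : ℂ), ∀ j < m + 1,
      iteratedDeriv j (fun z => G' (w, z)) 0 = (j.factorial : ℂ) * g j w := by
    have h1 := hdec (m + 1)
    have h2 := (hRa (m + 1)).eventually_analyticAt
    rw [Prod.zero_eq_mk, nhds_prod_eq] at h1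
    have h3 := h1.curry
    have h4 : Tendsto (fun w : ℂ => (w, (0 : ℂ))) (𝓝 0) (𝓝 0) := by
      have : Continuous (fun w : ℂ => (w, (0 : ℂ))) := by fun_prop
      simpa [Prod.mk_zero_zero] using this.tendsto 0
    filter_upwards [h3, h4.eventually h2] with w hw hRw
    refine iteratedDeriv_of_taylor (r := fun z => R (m + 1) (w, z)) (a := fun j => g j w) ?_ hw
    exact AnalyticAt.fun_comp (g := R (m + 1)) (f := fun z : ℂ => (w, z)) hRw (by fun_prop)
  have hG'0 : (fun z => G' (0, z)) = fun z => G (0, z) := by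
    ext z; simp [G', ha0]
  have hg0 : ∀ j < m, g j 0 = 0 := by
    intro j hj
    have := hcoef.self_of_nhds j (by omega)
    rw [hG'0, it0 j hj] at this
    simpa [Nat.factorial_ne_zero] using this.symm
  have hgm : g m 0 ≠ 0 := by
    intro h
    have := hcoef.self_of_nhds m (by omega)
    rw [hG'0, h, mul_zero] at this
    exact it1 this
  have hgm1 : ∀ᶠ w in 𝓝 (0 : ℂ), g (m - 1) w = 0 := by
    filter_upwards [hcoef, ha] with w hw haw
    have := hw (m - 1) (by omega)
    have h5 : iteratedDeriv (m - 1) (fun z => G' (w, z)) 0 = 0 := by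
      have := congrFun (iteratedDeriv_comp_add_const (m - 1) (fun z => G (w, z)) (a w)) 0
      simp only [G']
      rw [this]
      simpa using haw
    rw [h5] at this
    simpa [Nat.factorial_ne_zero] using this.symm
  let R' : ℂ × ℂ → ℂ := fun p => g m p.1 + p.2 * R (m + 1) p
  have hR'a : AnalyticAt ℂ R' 0 := by
    refine AnalyticAt.add ?_ (analyticAt_snd.mul (hRa _))
    exact AnalyticAt.fun_comp (g := g m) (f := fun p : ℂ × ℂ => p.1) (hga m) analyticAt_fst
  have hR'0 : R' (0, 0) = g m 0 := by simp [R']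
  have hdec' : ∀ᶠ p in 𝓝 (0 : ℂ × ℂ),
      G' p = ∑ j ∈ Finset.range m, p.2 ^ j * g j p.1 + p.2 ^ m * R' p := by
    filter_upwards [hdec (m + 1)] with p hp
    rw [hp, Finset.sum_range_succ]
    simp only [R']
    ring
  by_cases hall : ∀ j < m, ∀ᶠ w in 𝓝 0, g j w = 0
  · refine ⟨1, le_rfl, a, haa, ha0, ?_⟩
    have h4 : Tendsto (fun w : ℂ => (w, (0 : ℂ))) (𝓝 0) (𝓝 0) := by
      have : Continuous (fun w : ℂ => (w, (0 : ℂ))) := by fun_prop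
      simpa [Prod.mk_zero_zero] using this.tendsto 0
    filter_upwards [h4.eventually hdec', hall 0 (by omega)] with t ht h0
    have e : G (t ^ 1, a t) = G' (t, 0) := by simp [G']
    rw [e, ht, Finset.sum_eq_zero]
    · simp; left; omega
    · intro j hj
      rcases Nat.eq_zero_or_pos j with rfl | hj0
      · simp [h0]
      · simp [hj0.ne']
  · push Not at hall
    obtain ⟨p, q, h, hp, hq, hha, hhe, hhne, hhz⟩ := newton_exponents m g (fun j _ => hga j) hg0
      (by obtain ⟨j, hj, h⟩ := hall; exact ⟨j, hj, by simpa using h⟩)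
    let P : Polynomial ℂ := ∑ j ∈ Finset.range m, Polynomial.monomial j (h j 0) + Polynomial.monomial m (g m 0)
    have hPc : ∀ j < m, P.coeff j = h j 0 := by
      intro j hj
      have : m ≠ j := by omega
      simp [P, Polynomial.coeff_monomial, hj, this]
    have hPm : P.coeff m = g m 0 := by
      simp [P, Polynomial.coeff_monomial]
    have hPd : P.natDegree = m := by
      apply Polynomial.natDegree_eq_of_le_of_coeff_ne_zero
      · refine Polynomial.natDegree_add_le_of_degree_le (Polynomial.natDegree_sum_le_of_forall_le _ _ ?_) (Polynomial.natDegree_monomial_le _)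
        intro j hj
        have := Finset.mem_range.1 hj
        exact (Polynomial.natDegree_monomial_le _).trans (by omega)
      · rw [hPm]; exact hgm
    obtain ⟨w, k, hk, hkm, Q, hQ, hPQ⟩ := poly_root m P hPd hm
      (by rw [hPc _ (by omega)]; exact hhz _ (by omega) hgm1)
      (by obtain ⟨j, hj, h⟩ := hhne; exact ⟨j, hj, by rwa [hPc j hj]⟩)
    let H : ℂ × ℂ → ℂ := fun x => ∑ j ∈ Finset.range m, (w + x.2) ^ j * h j x.1 +
      (w + x.2) ^ m * R' (x.1 ^ q, x.1 ^ p * (w + x.2))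
    have hfst : AnalyticAt ℂ (fun x : ℂ × ℂ => x.1) 0 := analyticAt_fst
    have hsnd : AnalyticAt ℂ (fun x : ℂ × ℂ => x.2) 0 := analyticAt_snd
    have hHa : AnalyticAt ℂ H 0 := by
      refine AnalyticAt.add ?_ (AnalyticAt.mul (by fun_prop) ?_)
      · refine Finset.analyticAt_fun_sum _ fun j hj => ?_
        refine AnalyticAt.mul (by fun_prop) ?_
        exact AnalyticAt.fun_comp (g := h j) (f := fun p : ℂ × ℂ => p.1) (hha j (Finset.mem_range.1 hj)) analyticAt_fst
      · refine AnalyticAt.fun_comp (g := R') (f := fun x : ℂ × ℂ => (x.1 ^ q, x.1 ^ p * (w + x.2))) ?_ (by fun_prop)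
        have : ((0 : ℂ × ℂ).1 ^ q, (0 : ℂ × ℂ).1 ^ p * (w + (0 : ℂ × ℂ).2)) = 0 := by
          simp [show q ≠ 0 by omega, show p ≠ 0 by omega]
        rw [this]; exact hR'a
    have hH0 : ∀ v, H (0, v) = v ^ k * Q.eval (w + v) := by
      intro v
      have e1 : H (0, v) = P.eval (w + v) := by
        simp [H, P, Polynomial.eval_finsetSum, Polynomial.eval_monomial, show q ≠ 0 by omega,
          show p ≠ 0 by omega, hR'0, mul_comm]
      rw [e1, hPQ]
      simp
    have hHord : analyticOrderAt (fun v => H (0, v)) 0 = k := by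
      have h6 : AnalyticAt ℂ (fun v : ℂ => Q.eval (w + v)) 0 := by
        have : Differentiable ℂ (fun v : ℂ => Q.eval (w + v)) := by fun_prop
        exact this.analyticAt 0
      rw [AnalyticAt.analyticOrderAt_eq_natCast]
      · refine ⟨_, h6, by simpa using hQ, ?_⟩
        filter_upwards with v
        simp [hH0]
      · simp only [hH0]
        exact AnalyticAt.mul (by fun_prop) h6
    obtain ⟨l, hl, y, hya, hy0, hy⟩ := IH k hkm H hk hHa hHord
    have hl0 : l ≠ 0 := by omega
    have hp0 : p ≠ 0 := by omega
    have hq0 : q ≠ 0 := by omega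
    have hcomp : AnalyticAt ℂ (fun t : ℂ => a ((t ^ l) ^ q)) 0 :=
      AnalyticAt.fun_comp (g := a) (f := fun t : ℂ => (t ^ l) ^ q) (by simpa [hl0, hq0] using haa) (by fun_prop)
    refine ⟨l * q, Nat.mul_pos hl hq, fun t => (t ^ l) ^ p * (w + y t) + a ((t ^ l) ^ q), ?_, ?_, ?_⟩
    · exact AnalyticAt.add (by fun_prop) hcomp
    · simp [hl0, hp0, hq0, ha0]
    · have t1 : Tendsto (fun t : ℂ => t ^ l) (𝓝 0) (𝓝 0) := by
        have : Continuous (fun s : ℂ => s ^ l) := by fun_prop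
        simpa [hl0] using this.tendsto 0
      have t2 : Tendsto (fun t : ℂ => ((t ^ l) ^ q, (t ^ l) ^ p * (w + y t))) (𝓝 0) (𝓝 0) := by
        have : ContinuousAt (fun t : ℂ => ((t ^ l) ^ q, (t ^ l) ^ p * (w + y t))) 0 := by
          have := hya.continuousAt
          fun_prop
        simpa [ContinuousAt, hl0, hp0, hq0, Prod.mk_zero_zero] using this
      have t3 : ∀ᶠ s in 𝓝 (0 : ℂ), ∀ j ∈ Finset.range m, g j (s ^ q) = s ^ (p * (m - j)) * h j s := by
        rw [Filter.eventually_all_finset]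
        intro j hj
        exact hhe j (Finset.mem_range.1 hj)
      filter_upwards [hy, t2.eventually hdec', t1.eventually t3] with t h1 h2 h3
      have e : G (t ^ (l * q), (t ^ l) ^ p * (w + y t) + a ((t ^ l) ^ q)) =
          G' ((t ^ l) ^ q, (t ^ l) ^ p * (w + y t)) := by simp only [G', pow_mul]
      rw [e, h2]
      have e2 : ∑ j ∈ Finset.range m, ((t ^ l) ^ p * (w + y t)) ^ j * g j ((t ^ l) ^ q) +
          ((t ^ l) ^ p * (w + y t)) ^ m * R' ((t ^ l) ^ q, (t ^ l) ^ p * (w + y t)) =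
          (t ^ l) ^ (p * m) * H (t ^ l, y t) := by
        simp only [H]
        rw [mul_add (_ ^ (p * m)), Finset.mul_sum]
        congr 1
        · refine Finset.sum_congr rfl fun j hj => ?_
          rw [h3 j hj]
          have hjm := Finset.mem_range.1 hj
          have e3 : p * m = p * j + p * (m - j) := by rw [← mul_add]; congr 1; omega
          rw [e3, mul_pow, pow_add, pow_mul (t ^ l) p j]
          ring
        · rw [mul_pow, pow_mul (t ^ l) p m]
          ring
      rw [e2, h1, mul_zero]

end Puiseux

namespace Puiseux
open Filter Topology

theorem covering (c : ℂ) (ρ : ℝ) (hρ : 0 < ρ) (K : ℕ) (hK : K ≠ 0) :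
    (fun t : ℂ => c + (ρ * t) ^ K) '' ball (0 : ℂ) 1 = ball c (ρ ^ K) ∧
    ∃ hmaps : Set.MapsTo (fun t : ℂ => c + (ρ * t) ^ K) (ball (0 : ℂ) 1 \ {0}) (ball c (ρ ^ K) \ {c}),
      IsCoveringMap hmaps.restrict := by
  have hρ' : (ρ : ℂ) ≠ 0 := by exact_mod_cast hρ.ne'
  have hmem : ∀ t : ℂ, c + (ρ * t) ^ K ∈ ball c (ρ ^ K) ↔ t ∈ ball (0 : ℂ) 1 := by
    intro t
    simp only [mem_ball, dist_eq_norm, add_sub_cancel_left, norm_pow, norm_mul, sub_zero,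
      Complex.norm_real, Real.norm_of_nonneg hρ.le]
    rw [pow_lt_pow_iff_left₀ (by positivity) hρ.le hK]
    constructor
    · intro h; nlinarith
    · intro h; nlinarith
  have hpre : (fun t : ℂ => c + (ρ * t) ^ K) ⁻¹' (ball c (ρ ^ K) \ {c}) = ball (0 : ℂ) 1 \ {0} := by
    ext t
    simp only [Set.mem_preimage, Set.mem_sdiff, hmem, Set.mem_singleton_iff]
    simp [hK, hρ']
  refine ⟨?_, fun t ht => ?_, ?_⟩
  · ext v
    constructor
    · rintro ⟨t, ht, rfl⟩
      exact (hmem t).2 ht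
    · intro hv
      obtain ⟨s, hs⟩ := IsAlgClosed.exists_pow_nat_eq (v - c) (Nat.pos_of_ne_zero hK)
      have e : c + (ρ * (s / ρ)) ^ K = v := by
        rw [mul_div_cancel₀ _ hρ', hs]; ring
      exact ⟨s / ρ, (hmem _).1 (by rwa [e]), e⟩
  · rw [← hpre] at ht; exact ht
  · obtain ⟨d, hd⟩ : ∃ d : ℂ, d = (ρ : ℂ) ^ K := ⟨_, rfl⟩
    have hd0 : d ≠ 0 := by rw [hd]; exact pow_ne_zero _ hρ'
    let p : Polynomial ℂ := Polynomial.C c + Polynomial.C d * Polynomial.X ^ K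
    have hp : p.eval = fun t : ℂ => c + (ρ * t) ^ K := by
      ext t; simp [p, mul_pow, hd]
    have h1 := p.isCoveringMapOn_eval
    have h2 : IsCoveringMapOn (fun t : ℂ => c + (ρ * t) ^ K) (ball c (ρ ^ K) \ {c}) := by
      rw [← hp]
      refine h1.mono ?_
      rintro v ⟨-, hv⟩ ⟨t, ht, rfl⟩
      apply hv
      simp [p, Polynomial.derivative_X_pow, hK, hd0] at ht
      obtain ⟨rfl, hK1⟩ := ht
      simp [p, hK]
    exact h2.isCoveringMap_restrictPreimage.comp_homeomorph (.setCongr hpre.symm)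

theorem local_branch
    (S U : Set ℂ) (hSopen : IsOpen S)
    (hUopen : IsOpen U) (hUconn : IsConnected U)
    (F : ℂ × ℂ → ℂ) (hF : DifferentiableOn ℂ F (S ×ˢ U))
    (hnc : ∀ lam ∈ S, ¬ ∃ c : ℂ, ∀ z ∈ U, F (lam, z) = c)
    (γ : ℂ → ℂ) (hγ : DifferentiableOn ℂ γ S)
    (lam0 : ℂ) (hlam0 : lam0 ∈ S) (z : ℂ) (hzU : z ∈ U) (hpre : F (lam0, z) = γ lam0) :
    ∃ k, 1 ≤ k ∧ ∃ y : ℂ → ℂ, AnalyticAt ℂ y 0 ∧ y 0 = 0 ∧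
      ∀ᶠ t in 𝓝 0, F (lam0 + t ^ k, z + y t) = γ (lam0 + t ^ k) := by
  have hFa : AnalyticAt ℂ F (lam0, z) := by
    apply analyticAt_of_differentiable
    have hO : IsOpen (S ×ˢ U) := hSopen.prod hUopen
    filter_upwards [hO.mem_nhds (show (lam0, z) ∈ S ×ˢ U from ⟨hlam0, hzU⟩)] with p hp
    exact hF.differentiableAt (hO.mem_nhds hp)
  have hγa : AnalyticAt ℂ γ lam0 := hγ.analyticAt (hSopen.mem_nhds hlam0)
  let G : ℂ × ℂ → ℂ := fun p => F (lam0 + p.1, z + p.2) - γ (lam0 + p.1)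
  have hfst : AnalyticAt ℂ (fun x : ℂ × ℂ => x.1) 0 := analyticAt_fst
  have hsnd : AnalyticAt ℂ (fun x : ℂ × ℂ => x.2) 0 := analyticAt_snd
  have hG : AnalyticAt ℂ G 0 := by
    refine AnalyticAt.sub ?_ ?_
    · exact AnalyticAt.fun_comp (g := F) (f := fun p : ℂ × ℂ => (lam0 + p.1, z + p.2))
        (by simpa using hFa) (by fun_prop)
    · exact AnalyticAt.fun_comp (g := γ) (f := fun p : ℂ × ℂ => lam0 + p.1)
        (by simpa using hγa) (by fun_prop)
  have hG0 : AnalyticAt ℂ (fun v : ℂ => G (0, v)) 0 :=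
    AnalyticAt.fun_comp (g := G) (f := fun z : ℂ => ((0 : ℂ), z)) hG (by fun_prop)
  have htop : analyticOrderAt (fun v : ℂ => G (0, v)) 0 ≠ ⊤ := by
    intro h
    rw [analyticOrderAt_eq_top] at h
    have hsl : AnalyticOnNhd ℂ (fun v => F (lam0, v)) U := by
      apply DifferentiableOn.analyticOnNhd _ hUopen
      exact hF.comp (t := S ×ˢ U) (f := fun v : ℂ => (lam0, v)) (by fun_prop) fun v hv => ⟨hlam0, hv⟩
    have hev : (fun v => F (lam0, v)) =ᶠ[𝓝 z] fun _ => γ lam0 := by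
      have ht : Tendsto (fun v : ℂ => v - z) (𝓝 z) (𝓝 0) := by
        have : Continuous (fun v : ℂ => v - z) := by fun_prop
        simpa using this.tendsto z
      filter_upwards [ht.eventually h] with v hv
      simpa [G, sub_eq_zero] using hv
    exact hnc lam0 hlam0 ⟨γ lam0, fun v hv =>
      hsl.eqOn_of_preconnected_of_eventuallyEq analyticOnNhd_const hUconn.isPreconnected hzU hev hv⟩
  obtain ⟨m, hm⟩ := ENat.ne_top_iff_exists.1 htop
  have hm1 : 1 ≤ m := by
    by_contra hlt
    have : m = 0 := by omega
    subst this
    have h0 : analyticOrderAt (fun v : ℂ => G (0, v)) 0 ≠ 0 := by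
      rw [hG0.analyticOrderAt_ne_zero]
      simp [G, hpre]
    exact h0 (by simpa using hm.symm)
  obtain ⟨k, hk, y, hya, hy0, hy⟩ := puiseux m G hm1 hG hm.symm
  exact ⟨k, hk, y, hya, hy0, hy.mono fun t ht => sub_eq_zero.1 ht⟩

end Puiseux

/-- **Holomorphic dependence of preimages.**
Let `S, U ⊆ ℂ` be domains and `F : S × U → ℂ` holomorphic such that `F(λ, ·)` is
nonconstant on `U` for every `λ ∈ S`. Let `γ : S → ℂ` be holomorphic, `λ₀ ∈ S`,
and `z₁, …, z_N` distinct points of `U` with `F(λ₀, z_i) = γ(λ₀)`. Then there is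
a neighborhood `V ⊆ S` of `λ₀`, a holomorphic map `π : 𝔻 → V` with `π(0) = λ₀`,
surjective onto `V`, restricting to a covering map `𝔻 ∖ {0} → V ∖ {λ₀}`, and
holomorphic maps `x_i : 𝔻 → U` with `x_i(0) = z_i` and
`F(π(t), x_i(t)) = γ(π(t))` for all `t ∈ 𝔻`. -/
theorem holomorphic_dependence_of_preimages
    (S U : Set ℂ) (hSopen : IsOpen S) (hSconn : IsConnected S)
    (hUopen : IsOpen U) (hUconn : IsConnected U)
    (F : ℂ × ℂ → ℂ) (hF : DifferentiableOn ℂ F (S ×ˢ U))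
    (hnc : ∀ lam ∈ S, ¬ ∃ c : ℂ, ∀ z ∈ U, F (lam, z) = c)
    (γ : ℂ → ℂ) (hγ : DifferentiableOn ℂ γ S)
    (lam0 : ℂ) (hlam0 : lam0 ∈ S)
    (N : ℕ) (hN : 1 ≤ N)
    (z : Fin N → ℂ) (hzU : ∀ i, z i ∈ U) (hzinj : Function.Injective z)
    (hpre : ∀ i, F (lam0, z i) = γ lam0) :
    ∃ V : Set ℂ, IsOpen V ∧ lam0 ∈ V ∧ V ⊆ S ∧
      ∃ pr : ℂ → ℂ,
        DifferentiableOn ℂ pr (ball (0 : ℂ) 1) ∧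
        pr 0 = lam0 ∧
        pr '' ball (0 : ℂ) 1 = V ∧
        (∃ hmaps : Set.MapsTo pr (ball (0 : ℂ) 1 \ {0}) (V \ {lam0}),
          IsCoveringMap hmaps.restrict) ∧
        ∃ x : Fin N → ℂ → ℂ,
          (∀ i, DifferentiableOn ℂ (x i) (ball (0 : ℂ) 1)) ∧
          (∀ i, Set.MapsTo (x i) (ball (0 : ℂ) 1) U) ∧
          (∀ i, x i 0 = z i) ∧
          (∀ i, ∀ t ∈ ball (0 : ℂ) 1, F (pr t, x i t) = γ (pr t)) := by
  have hloc := fun i => Puiseux.local_branch S U hSopen hUopen hUconn F hF hnc γ hγ lam0 hlam0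
    (z i) (hzU i) (hpre i)
  choose k hk y hya hy0 hy using hloc
  let K := ∏ i, k i
  have hK : K ≠ 0 := Finset.prod_ne_zero_iff.2 fun i _ => by have := hk i; omega
  have hdvd : ∀ i, ∃ e, K = k i * e := fun i => Finset.dvd_prod_of_mem k (Finset.mem_univ i)
  choose e he using hdvd
  have he0 : ∀ i, e i ≠ 0 := by
    intro i h
    have := he i
    rw [h, mul_zero] at this
    exact hK this
  have hpow : ∀ n : ℕ, n ≠ 0 →
      Filter.Tendsto (fun t : ℂ => t ^ n) (nhds 0) (nhds 0) := by
    intro n hn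
    have : Continuous (fun t : ℂ => t ^ n) := by fun_prop
    simpa [hn] using this.tendsto 0
  have hev : ∀ᶠ t in nhds (0 : ℂ), ∀ i, AnalyticAt ℂ (y i) (t ^ e i) ∧ z i + y i (t ^ e i) ∈ U ∧
      F (lam0 + (t ^ e i) ^ k i, z i + y i (t ^ e i)) = γ (lam0 + (t ^ e i) ^ k i) := by
    rw [Filter.eventually_all]
    intro i
    have h1 := (hpow _ (he0 i)).eventually (hya i).eventually_analyticAt
    have h2 := (hpow _ (he0 i)).eventually (hy i)
    have h3 : ∀ᶠ s in nhds (0 : ℂ), z i + y i s ∈ U := by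
      have hc : ContinuousAt (fun s => z i + y i s) 0 := continuousAt_const.add (hya i).continuousAt
      exact hc.eventually_mem (hUopen.mem_nhds (by simpa [hy0 i] using hzU i))
    filter_upwards [h1, h2, (hpow _ (he0 i)).eventually h3] with t a b c
    exact ⟨a, c, b⟩
  have hevS : ∀ᶠ t in nhds (0 : ℂ), lam0 + t ^ K ∈ S := by
    have hc : ContinuousAt (fun t : ℂ => lam0 + t ^ K) 0 := by fun_prop
    exact hc.eventually_mem (hSopen.mem_nhds (by simpa [hK] using hlam0))
  obtain ⟨ρ, hρ, hρb⟩ := Metric.eventually_nhds_iff_ball.1 (hev.and hevS)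
  have hsc : ∀ t ∈ ball (0 : ℂ) 1, (ρ : ℂ) * t ∈ ball (0 : ℂ) ρ := by
    intro t ht
    simp only [mem_ball, dist_zero_right, norm_mul, Complex.norm_real,
      Real.norm_of_nonneg hρ.le] at ht ⊢
    nlinarith
  obtain ⟨himg, hcov⟩ := Puiseux.covering lam0 ρ hρ K hK
  refine ⟨ball lam0 (ρ ^ K), isOpen_ball, mem_ball_self (by positivity), ?_,
    fun t => lam0 + (ρ * t) ^ K, by fun_prop, by simp [hK], himg, hcov,
    fun i t => z i + y i ((ρ * t) ^ e i), ?_, ?_, ?_, ?_⟩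
  · rw [← himg]
    rintro _ ⟨t, ht, rfl⟩
    exact (hρb _ (hsc t ht)).2
  · intro i t ht
    refine DifferentiableAt.differentiableWithinAt ?_
    have h1 := ((hρb _ (hsc t ht)).1 i).1.differentiableAt
    have h2 : DifferentiableAt ℂ (fun t : ℂ => ((ρ : ℂ) * t) ^ e i) t := by fun_prop
    exact (differentiableAt_const _).add (DifferentiableAt.fun_comp' t h1 h2)
  · intro i t ht
    exact ((hρb _ (hsc t ht)).1 i).2.1
  · intro i
    simp [he0 i, hy0 i]
  · intro i t ht
    have := ((hρb _ (hsc t ht)).1 i).2.2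
    rw [← pow_mul, mul_comm (e i), ← he i] at this
    exact this
end
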